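/- For λ > −1, t ∈ ℝ and integer m ≥ 2, let P_n be the monic orthogonal polynomials of the generalised higher order Freud weight with recurrence coefficients β_n and even moments μ_{2k}(t,λ). Define polynomials C_n(x), D_n(x) recursively by C₀(x) = −1 + 2(t x² − m x^{2m} + λ + 1), D_{−1}(x) = 0, D₀(x) = 2x ( m Σ_{j=1}^{m} μ_{2j−2}(t,λ) x^{2m−2j} − t μ₀(t,λ) ), C_{n+1}(x) = −C_n(x) + (2x/β_n) D_n(x), and D_{n+1}(x) = −x + (β_n/β_{n−1}) D_{n−1}(x) + (x²/β_n) D_n(x) − x C_n(x). Then for every n ≥ 0 the polynomial P_{n+1} satisfies the second-order linear differential equation J(x;n) P_{n+1}″(x) + K(x;n) P_{n+1}′(x) + L(x;n) P_{n+1}(x) = 0, where J(x;n) = x D_{n+1}(x), K(x;n) = C₀(x) D_{n+1}(x) − x D_{n+1}′(x) + D_{n+1}(x), and L(x;n) = 𝒲( (C_{n+1}(x) − C₀(x))/2 , D_{n+1}(x) ) − D_{n+1}(x) Σ_{j=0}^{n} D_j(x)/β_j, with 𝒲(f,g) = f g′ − f′ g. -/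

import Mathlib

open MeasureTheory Real Polynomial

/-- The generalised higher order Freud weight `ω(x;t,λ) = |x|^{2λ+1} exp(t x² − x^{2m})`. -/
noncomputable def freudWeight (m : ℕ) (lam t x : ℝ) : ℝ :=
  |x| ^ (2 * lam + 1) * Real.exp (t * x ^ 2 - x ^ (2 * m))

/-- The `k`-th moment `μ_k(t,λ)` of the generalised higher order Freud weight. -/
noncomputable def freudMoment (m : ℕ) (lam t : ℝ) (k : ℕ) : ℝ :=
  ∫ x : ℝ, x ^ k * freudWeight m lam t x

/-- For `λ > −1`, `t ∈ ℝ` and integer `m ≥ 2`, with `C_n, D_n` defined by the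
stated recursions, every monic orthogonal polynomial `P_{n+1}` of the generalised higher order
Freud weight satisfies the second-order linear differential equation
`J(x;n) P_{n+1}″ + K(x;n) P_{n+1}′ + L(x;n) P_{n+1} = 0` with
`J = x D_{n+1}`, `K = C₀ D_{n+1} − x D_{n+1}′ + D_{n+1}` and
`L = 𝒲((C_{n+1} − C₀)/2, D_{n+1}) − D_{n+1} Σ_{j=0}^{n} D_j/β_j`. -/
theorem second_order_ode (m : ℕ) (hm : 2 ≤ m) (lam t : ℝ) (hlam : -1 < lam)
    (P : ℕ → Polynomial ℝ) (β : ℕ → ℝ) (Cp D : ℕ → Polynomial ℝ)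
    (hmonic : ∀ n, (P n).Monic) (hdeg : ∀ n, (P n).natDegree = n)
    (horth : ∀ j k, j ≠ k →
      ∫ x : ℝ, (P j).eval x * (P k).eval x * freudWeight m lam t x = 0)
    (hβpos : ∀ n, 0 < β n)
    (hP0 : P 0 = 1) (hP1 : P 1 = X)
    (hrec : ∀ n, 1 ≤ n → P (n + 1) = X * P n - C (β n) * P (n - 1))
    -- `C₀(x) = −1 + 2(t x² − m x^{2m} + λ + 1)`
    (hC0 : Cp 0 = Polynomial.C (2 * lam + 1) + Polynomial.C (2 * t) * X ^ 2
      - Polynomial.C (2 * (m : ℝ)) * X ^ (2 * m))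
    -- `D₀(x) = 2x (m Σ_{j=1}^{m} μ_{2j−2} x^{2m−2j} − t μ₀)`
    (hD0 : D 0 = Polynomial.C 2 * X *
      (Polynomial.C (m : ℝ) *
          (∑ j ∈ Finset.range m, Polynomial.C (freudMoment m lam t (2 * j)) * X ^ (2 * m - 2 * j - 2))
        - Polynomial.C (t * freudMoment m lam t 0)))
    -- `C_{n+1}(x) = −C_n(x) + (2x/β_n) D_n(x)`
    (hCrec : ∀ n, Cp (n + 1) = -Cp n + Polynomial.C (2 / β n) * X * D n)
    -- `D₁(x) = −x + (x²/β₀) D₀(x) − x C₀(x)`  (the term with `D_{−1} = 0` is absent)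
    (hD1 : D 1 = -X + Polynomial.C (β 0)⁻¹ * X ^ 2 * D 0 - X * Cp 0)
    -- `D_{n+1}(x) = −x + (β_n/β_{n−1}) D_{n−1}(x) + (x²/β_n) D_n(x) − x C_n(x)`
    (hDrec : ∀ n, 1 ≤ n → D (n + 1) = -X + Polynomial.C (β n / β (n - 1)) * D (n - 1)
      + Polynomial.C (β n)⁻¹ * X ^ 2 * D n - X * Cp n) :
    ∀ n : ℕ,
      (X * D (n + 1)) * derivative (derivative (P (n + 1)))
        + (Cp 0 * D (n + 1) - X * derivative (D (n + 1)) + D (n + 1)) * derivative (P (n + 1))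
        + ((Polynomial.C (1 / 2 : ℝ) * (Cp (n + 1) - Cp 0) * derivative (D (n + 1))
              - derivative (Polynomial.C (1 / 2 : ℝ) * (Cp (n + 1) - Cp 0)) * D (n + 1))
            - D (n + 1) * ∑ j ∈ Finset.range (n + 1), Polynomial.C (β j)⁻¹ * D j)
          * P (n + 1) = 0 := by
  clear horth hmonic hdeg hD0 hC0
  obtain ⟨b, hb⟩ : ∃ b : ℕ → Polynomial ℝ, ∀ n, b n = C (β n) := ⟨_, fun _ => rfl⟩
  obtain ⟨c, hc⟩ : ∃ c : ℕ → Polynomial ℝ, ∀ n, c n = C (β n)⁻¹ := ⟨_, fun _ => rfl⟩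
  obtain ⟨G, hG⟩ : ∃ G : ℕ → Polynomial ℝ, ∀ n, G n = C (1 / 2 : ℝ) * (Cp n - Cp 0) :=
    ⟨_, fun _ => rfl⟩
  have hbc : ∀ n, b n * c n = 1 := fun n => by
    rw [hb, hc, ← C_mul, mul_inv_cancel₀ (hβpos n).ne', C_1]
  have hhalf : (C (1 / 2 : ℝ) : Polynomial ℝ) * 2 = 1 := by
    rw [show (2 : Polynomial ℝ) = C 2 from rfl, ← C_mul]; norm_num
  have hCG : ∀ n, Cp n = 2 * G n + Cp 0 := fun n => by
    rw [hG]; linear_combination (-(Cp n - Cp 0)) * hhalf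
  have hG0 : G 0 = 0 := by rw [hG]; ring
  have hGrec : ∀ n, G (n + 1) = -G n - Cp 0 + X * (c n * D n) := fun n => by
    have h2 : C (2 / β n) = 2 * c n := by
      rw [hc, div_eq_mul_inv, C_mul]; rfl
    rw [hG (n + 1), hG n, hCrec, h2]
    linear_combination (X * c n * D n - Cp 0) * hhalf
  have hD1' : D 1 = -X + X * G 1 := by
    rw [hD1, hGrec 0, hG0, hc]; ring
  have hDrec' : ∀ n, D (n + 2) = -X + b (n + 1) * (c n * D n)
      + X * (G (n + 2) - G (n + 1)) := fun n => by
    have h2 : C (β (n + 1) / β n) = b (n + 1) * c n := by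
      rw [hb, hc, div_eq_mul_inv, C_mul]
    have h := hDrec (n + 1) (by omega)
    simp only [Nat.add_sub_cancel] at h
    rw [h, h2, ← hc, hGrec (n + 1), hCG (n + 1)]; ring
  have hrec' : ∀ n, P (n + 2) = X * P (n + 1) - b (n + 1) * P n := fun n => by
    have h := hrec (n + 1) (by omega)
    simp only [Nat.add_sub_cancel] at h
    rw [h, hb]
  have hdrec : ∀ n, derivative (P (n + 2)) = P (n + 1) + X * derivative (P (n + 1))
      - b (n + 1) * derivative (P n) := fun n => by
    rw [hrec', hb]; simp
  -- structure relations
  have key : ∀ n, X * derivative (P (n + 1)) = G (n + 1) * P (n + 1) - D (n + 1) * P n ∧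
      X * derivative (P n) = -(G (n + 1) + Cp 0) * P n + c n * D n * P (n + 1) := by
    intro n
    induction n with
    | zero =>
      constructor
      · rw [hD1', hP1, hP0]; simp; ring
      · rw [hGrec 0, hG0, hP1, hP0]; simp; ring
    | succ n ih =>
      obtain ⟨h1, h2⟩ := ih
      refine ⟨?_, ?_⟩
      · rw [hdrec]
        have e1 := hrec' n
        have e2 := hDrec' n
        have e3 := hGrec (n + 1)
        have e4 := hbc (n + 1)
        linear_combination X * h1 - b (n + 1) * h2 + P (n + 1) * e2
          - G (n + 2) * e1 + b (n + 1) * P n * e3 + X * D (n + 1) * P n * e4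
      · rw [h1, hrec', hGrec (n + 1)]
        linear_combination D (n + 1) * P n * hbc (n + 1)
  have hsum : ∀ n, G (n + 1) * (G (n + 1) + Cp 0) - D (n + 1) * (c n * D n)
      = X * ∑ j ∈ Finset.range (n + 1), c j * D j := by
    intro n
    induction n with
    | zero => rw [Finset.sum_range_one, hD1', hGrec 0, hG0]; ring
    | succ n ih =>
      rw [Finset.sum_range_succ]
      have e2 := hDrec' n
      have e3 := hGrec (n + 1)
      have e4 := hbc (n + 1)
      linear_combination ih + (G (n + 2) - G (n + 1)) * e3 - (c (n + 1) * D (n + 1)) * e2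
        - c n * D n * D (n + 1) * e4
  intro n
  simp only [← hG, ← hc]
  obtain ⟨h1, h2⟩ := key n
  have h3 := hsum n
  have h4 := congrArg derivative h1
  simp only [derivative_mul, derivative_sub, derivative_X, one_mul] at h4
  apply mul_left_cancel₀ (X_ne_zero : (X : Polynomial ℝ) ≠ 0)
  rw [mul_zero]
  generalize (∑ j ∈ Finset.range (n + 1), c j * D j) = S at *
  linear_combination X * D (n + 1) * h4 - D (n + 1) ^ 2 * h2
    + D (n + 1) * P (n + 1) * h3
    + (D (n + 1) * (G (n + 1) + Cp 0) - X * derivative (D (n + 1))) * h1
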